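/- The function u_α is a solution of the fourth-order ordinary differential equation u⁗(y) − 2α²·u''(y) + α⁴·u(y) = 0 for all y ∈ ℝ, and it satisfies the boundary conditions u_α(0) = 0, u_α'(0) = 0, u_α(h) = 0, and u_α'(h) = φ. -/

import Mathlib

/-- The per-mode biharmonic extension
`u_α(y) = C₁e^{αy} + C₂ y e^{αy} + C₃ e^{−αy} + C₄ y e^{−αy}` with the coefficients
determined by the boundary conditions `u(0) = u'(0) = u(h) = 0`, `u'(h) = φ`. -/
noncomputable def uAux (h α : ℝ) (φ : ℂ) (y : ℝ) : ℂ :=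
  let Λα : ℝ := 2 * Real.exp (2 * α * h) - Real.exp (4 * α * h)
    + 4 * α ^ 2 * h ^ 2 * Real.exp (2 * α * h) - 1
  let C₁ : ℂ := φ * (h : ℂ) * (Real.exp (α * h) : ℂ) * ((Real.exp (2 * α * h) : ℂ) - 1) / (Λα : ℂ)
  let C₂ : ℂ := φ * (Real.exp (α * h) : ℂ) *
    ((2 * α * h : ℝ) - (Real.exp (2 * α * h) : ℂ) + 1) / (Λα : ℂ)
  let C₃ : ℂ := -(φ * (h : ℂ) * (Real.exp (α * h) : ℂ) * ((Real.exp (2 * α * h) : ℂ) - 1) / (Λα : ℂ))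
  let C₄ : ℂ := -(φ * (Real.exp (α * h) : ℂ) *
    ((2 * α * h : ℝ) * (Real.exp (2 * α * h) : ℂ) - (Real.exp (2 * α * h) : ℂ) + 1) / (Λα : ℂ))
  C₁ * (Real.exp (α * y) : ℂ) + C₂ * (y : ℂ) * (Real.exp (α * y) : ℂ)
    + C₃ * (Real.exp (-(α * y)) : ℂ) + C₄ * (y : ℂ) * (Real.exp (-(α * y)) : ℂ)

/-!
The characteristic polynomial `(X² - α²)²` has the double roots `±α`, so every function
`(A + B y) e^{αy} + (C + D y) e^{-αy}` solves the equation. For the boundary values, the four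
exponential terms of `u_α` recombine into
`u_α(y) = φ ((h - y) sinh(αh) sinh(αy) + αh y sinh(α(y - h))) / ((αh)² - sinh²(αh))`.
Here the values at `0` and `h` and the slope at `0` vanish by cancellation, the slope of the
numerator at `h` is the denominator times `φ`, and `|t| < |sinh t|` for `t ≠ 0`.
-/

/-- The function `y ↦ (A + B y) e^{ay}` of a real variable: the general solution of
`(d/dy - a)² u = 0`. -/
noncomputable def linearMulExp (a A B : ℂ) (y : ℝ) : ℂ :=
  (A + B * y) * Complex.exp (a * y)

section linearMulExp

variable (a A B : ℂ)

theorem contDiff_linearMulExp {n : WithTop ℕ∞} : ContDiff ℝ n (linearMulExp a A B) := by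
  have ofReal_contDiff : ContDiff ℝ n ((↑) : ℝ → ℂ) := Complex.ofRealCLM.contDiff
  unfold linearMulExp
  fun_prop

theorem deriv_linearMulExp :
    deriv (linearMulExp a A B) = linearMulExp a (a * A + B) (a * B) := by
  funext y
  have hid : HasDerivAt (fun y : ℝ ↦ (y : ℂ)) 1 y := Complex.ofRealCLM.hasDerivAt
  have hderiv := ((hid.const_mul B).const_add A).mul (hid.const_mul a).cexp
  refine hderiv.deriv.trans ?_
  unfold linearMulExp
  ring

theorem iteratedDeriv_linearMulExp (n : ℕ) :
    iteratedDeriv n (linearMulExp a A B) =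
      linearMulExp a (a ^ n * A + n * a ^ (n - 1) * B) (a ^ n * B) := by
  induction n with
  | zero => simp
  | succ n ih =>
    rw [iteratedDeriv_succ, ih, deriv_linearMulExp]
    congr 1
    · cases n with
      | zero => simp
      | succ n =>
        rw [Nat.add_sub_cancel, Nat.add_sub_cancel]
        push_cast
        ring
    · ring

theorem linearMulExp_ode (y : ℝ) :
    iteratedDeriv 4 (linearMulExp a A B) y - 2 * a ^ 2 * iteratedDeriv 2 (linearMulExp a A B) y
      + a ^ 4 * linearMulExp a A B y = 0 := by
  simp only [iteratedDeriv_linearMulExp, linearMulExp]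
  push_cast
  ring

end linearMulExp

theorem sq_lt_sinh_sq {t : ℝ} (ht : t ≠ 0) : t ^ 2 < Real.sinh t ^ 2 := by
  rw [sq_lt_sq, Real.abs_sinh, Real.self_lt_sinh_iff]
  exact abs_pos.mpr ht

theorem exp_two_mul_mul (a b : ℝ) : Real.exp (2 * a * b) = Real.exp (a * b) ^ 2 := by
  rw [mul_assoc, ← Real.exp_nat_mul, Nat.cast_ofNat]

/-- The real numerator of the hyperbolic form of `u_α / φ`; its denominator is
`(αh)² - sinh²(αh)`. -/
noncomputable def uAuxNumerator (h α y : ℝ) : ℝ :=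
  (h - y) * Real.sinh (α * h) * Real.sinh (α * y) + α * h * y * Real.sinh (α * (y - h))

theorem hasDerivAt_uAuxNumerator (h α y : ℝ) :
    HasDerivAt (uAuxNumerator h α)
      (Real.sinh (α * h) * ((h - y) * α * Real.cosh (α * y) - Real.sinh (α * y))
        + α * h * (Real.sinh (α * (y - h)) + y * α * Real.cosh (α * (y - h)))) y := by
  have hid := hasDerivAt_id' y
  have hsinh := (hid.const_mul α).sinh
  have hsinh_shift := ((hid.sub_const h).const_mul α).sinh
  have hderiv := (((hid.const_sub h).mul_const (Real.sinh (α * h))).mul hsinh).add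
    ((hid.const_mul (α * h)).mul hsinh_shift)
  refine hderiv.congr_deriv ?_
  ring

section uAux

variable (h α : ℝ) (φ : ℂ)

theorem uAux_eq_linearMulExp_add :
    ∃ A B C D : ℂ, uAux h α φ = linearMulExp α A B + linearMulExp (-α) C D := by
  obtain ⟨A, B, C, D, hu⟩ : ∃ A B C D : ℂ, uAux h α φ = fun y : ℝ ↦
      A * (Real.exp (α * y) : ℂ) + B * y * (Real.exp (α * y) : ℂ)
        + C * (Real.exp (-(α * y)) : ℂ) + D * y * (Real.exp (-(α * y)) : ℂ) :=
    ⟨_, _, _, _, rfl⟩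
  refine ⟨A, B, C, D, funext fun y ↦ ?_⟩
  rw [hu, Pi.add_apply, linearMulExp, linearMulExp, neg_mul]
  push_cast
  ring

theorem uAux_ode (y : ℝ) :
    iteratedDeriv 4 (uAux h α φ) y - 2 * (α : ℂ) ^ 2 * iteratedDeriv 2 (uAux h α φ) y
      + (α : ℂ) ^ 4 * uAux h α φ y = 0 := by
  obtain ⟨A, B, C, D, hu⟩ := uAux_eq_linearMulExp_add h α φ
  have iteratedDeriv_uAux (n : ℕ) : iteratedDeriv n (uAux h α φ) y =
      iteratedDeriv n (linearMulExp α A B) y + iteratedDeriv n (linearMulExp (-α) C D) y := by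
    rw [hu, iteratedDeriv_add (contDiff_linearMulExp ..).contDiffAt
      (contDiff_linearMulExp ..).contDiffAt]
  rw [iteratedDeriv_uAux, iteratedDeriv_uAux, hu, Pi.add_apply]
  linear_combination linearMulExp_ode α A B y + linearMulExp_ode (-α) C D y

theorem uAux_denominator_eq :
    2 * Real.exp (2 * α * h) - Real.exp (4 * α * h)
        + 4 * α ^ 2 * h ^ 2 * Real.exp (2 * α * h) - 1 =
      4 * Real.exp (α * h) ^ 2 * ((α * h) ^ 2 - Real.sinh (α * h) ^ 2) := by
  have exp_four : Real.exp (4 * α * h) = Real.exp (α * h) ^ 4 := by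
    rw [mul_assoc, ← Real.exp_nat_mul, Nat.cast_ofNat]
  rw [exp_two_mul_mul, exp_four, Real.sinh_eq, Real.exp_neg]
  field_simp
  ring

-- If `α * h = 0`, then both denominators vanish and both sides are `0`, as `x / 0 = 0`.
theorem uAux_eq_hyperbolic (y : ℝ) :
    uAux h α φ y = φ / ((α * h) ^ 2 - Real.sinh (α * h) ^ 2 : ℝ) * uAuxNumerator h α y := by
  have sinh_shift : Real.sinh (α * (y - h)) =
      (Real.exp (α * y) / Real.exp (α * h) - Real.exp (α * h) / Real.exp (α * y)) / 2 := by
    rw [Real.sinh_eq, ← Real.exp_sub, ← Real.exp_sub]; ring_nf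
  have exp_h_ne : (Real.exp (α * h) : ℂ) ≠ 0 := Complex.ofReal_ne_zero.mpr (Real.exp_ne_zero _)
  have exp_y_ne : (Real.exp (α * y) : ℂ) ≠ 0 := Complex.ofReal_ne_zero.mpr (Real.exp_ne_zero _)
  simp only [uAux, uAux_denominator_eq, uAuxNumerator]
  generalize (α * h) ^ 2 - Real.sinh (α * h) ^ 2 = Δ
  rw [exp_two_mul_mul, sinh_shift, Real.sinh_eq, Real.sinh_eq, Real.exp_neg, Real.exp_neg]
  push_cast [-Complex.ofReal_exp]
  field_simp
  ring

theorem deriv_uAux (y : ℝ) :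
    deriv (uAux h α φ) y =
      φ / ((α * h) ^ 2 - Real.sinh (α * h) ^ 2 : ℝ) * deriv (uAuxNumerator h α) y := by
  rw [funext (uAux_eq_hyperbolic h α φ), (hasDerivAt_uAuxNumerator h α y).deriv]
  exact ((hasDerivAt_uAuxNumerator h α y).ofReal_comp.const_mul _).deriv

theorem uAux_zero : uAux h α φ 0 = 0 := by
  simp [uAux_eq_hyperbolic, uAuxNumerator]

theorem uAux_self : uAux h α φ h = 0 := by
  simp [uAux_eq_hyperbolic, uAuxNumerator]

theorem deriv_uAux_zero : deriv (uAux h α φ) 0 = 0 := by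
  have deriv_numerator : deriv (uAuxNumerator h α) 0 = 0 := by
    rw [(hasDerivAt_uAuxNumerator h α 0).deriv, mul_zero, zero_sub, mul_neg, Real.sinh_neg,
      Real.sinh_zero, Real.cosh_zero]
    ring
  rw [deriv_uAux, deriv_numerator, Complex.ofReal_zero, mul_zero]

variable {h α}

theorem deriv_uAux_self (hαh : α * h ≠ 0) : deriv (uAux h α φ) h = φ := by
  have deriv_numerator :
      deriv (uAuxNumerator h α) h = (α * h) ^ 2 - Real.sinh (α * h) ^ 2 := by
    rw [(hasDerivAt_uAuxNumerator h α h).deriv, sub_self, mul_zero, Real.sinh_zero, Real.cosh_zero]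
    ring
  rw [deriv_uAux, deriv_numerator]
  exact div_mul_cancel₀ φ (Complex.ofReal_ne_zero.mpr (sub_neg.mpr (sq_lt_sinh_sq hαh)).ne)

end uAux

/-- `u_α` solves `u⁗ − 2α²u'' + α⁴u = 0` on `ℝ` with boundary values
`u(0) = 0`, `u'(0) = 0`, `u(h) = 0`, `u'(h) = φ`. -/
theorem uAux_solves_ode_and_bc (h α : ℝ) (φ : ℂ) (hh : 0 < h) (hα : α ≠ 0) :
    (∀ y : ℝ, iteratedDeriv 4 (uAux h α φ) y
        - 2 * (α : ℂ) ^ 2 * iteratedDeriv 2 (uAux h α φ) y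
        + (α : ℂ) ^ 4 * uAux h α φ y = 0) ∧
    uAux h α φ 0 = 0 ∧ deriv (uAux h α φ) 0 = 0 ∧
    uAux h α φ h = 0 ∧ deriv (uAux h α φ) h = φ :=
  ⟨uAux_ode h α φ, uAux_zero h α φ, deriv_uAux_zero h α φ, uAux_self h α φ,
    deriv_uAux_self φ (mul_ne_zero hα hh.ne')⟩
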